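/- In the gluing setup, for every n ∈ ℕ and every sequence of vertices x₀, x₁, …, xₙ ∈ V_d with x₀, xₙ ∈ V_p and x_{i-1}x_i ∈ E_d for all 0 < i ≤ n, we have p̂(x₀,xₙ) ≤ Σ_{i=1}^n d(x_{i-1}x_i). -/

import Mathlib

open scoped Classical

universe u

namespace GraphMetricPaper

variable {X : Type u}

/-- The vertex set `V = ⋃ E` of a graph given by an adjacency relation `E`. -/
def Vtx (E : X → X → Prop) : Set X := {x | ∃ y, E x y}

/-- Two points are joined by a walk in the graph `E`. -/
def Joined (E : X → X → Prop) (x y : X) : Prop :=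
  ∃ (n : ℕ) (c : ℕ → X), c 0 = x ∧ c n = y ∧ ∀ i, i < n → E (c i) (c (i + 1))

/-- The set of weights of walks from `x` to `y`. -/
def walkSums (E : X → X → Prop) (d : X → X → ℝ) (x y : X) : Set ℝ :=
  {s | ∃ (n : ℕ) (c : ℕ → X), c 0 = x ∧ c n = y ∧ (∀ i, i < n → E (c i) (c (i + 1))) ∧
    s = ∑ i ∈ Finset.range n, d (c i) (c (i + 1))}

/-- The shortest-path pseudometric `d̂` determined by a weight function `d` on a graph `E`. -/
noncomputable def hatd (E : X → X → Prop) (d : X → X → ℝ) (x y : X) : ℝ :=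
  sInf (walkSums E d x y)

/-- The function `ď` bounding the possible extensions of `d` from below:
`ď(x,y) = sup_{ab ∈ E} max {0, d(ab) - d̂(a,x) - d̂(y,b)}`. -/
noncomputable def checkd (E : X → X → Prop) (d : X → X → ℝ) (x y : X) : ℝ :=
  sSup ({0} ∪ {r | ∃ a b, E a b ∧ r = d a b - hatd E d a x - hatd E d y b})

/-- The pseudometric `d̈` on doubletons:
`d̈(xy,uv) = min {d̂(x,u) + d̂(y,v), d̂(x,v) + d̂(y,u)}`. -/
noncomputable def ddot (E : X → X → Prop) (d : X → X → ℝ) (x y u v : X) : ℝ :=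
  min (hatd E d x u + hatd E d y v) (hatd E d x v + hatd E d y u)

/-- `d` is a graph pseudometric with edge relation `E`:  `E` is a (symmetric, irreflexive)
connected graph, `d` is a nonnegative symmetric weight on the edges, and `d = d̂` on edges. -/
structure IsGraphPseudometric (E : X → X → Prop) (d : X → X → ℝ) : Prop where
  symm : ∀ ⦃a b⦄, E a b → E b a
  irrefl : ∀ a, ¬ E a a
  wt_symm : ∀ ⦃a b⦄, E a b → d a b = d b a
  nonneg : ∀ ⦃a b⦄, E a b → 0 ≤ d a b
  connected : ∀ x ∈ Vtx E, ∀ y ∈ Vtx E, Joined E x y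
  edge_eq : ∀ ⦃a b⦄, E a b → d a b = hatd E d a b

/-- A graph metric is a graph pseudometric with strictly positive weights. -/
def IsGraphMetric (E : X → X → Prop) (d : X → X → ℝ) : Prop :=
  IsGraphPseudometric E d ∧ ∀ ⦃a b⦄, E a b → 0 < d a b

/-- A floppy graph pseudometric: `ď(x,y) < d̂(x,y)` for every `xy ∈ [V]² \ E`. -/
def FloppyPseudometric (E : X → X → Prop) (d : X → X → ℝ) : Prop :=
  IsGraphPseudometric E d ∧
    ∀ x ∈ Vtx E, ∀ y ∈ Vtx E, x ≠ y → ¬ E x y → checkd E d x y < hatd E d x y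

/-- A floppy graph metric: `ď(x,y) < d̂(x,y)` for every `xy ∈ [V]² \ E`. -/
def FloppyMetric (E : X → X → Prop) (d : X → X → ℝ) : Prop :=
  IsGraphMetric E d ∧
    ∀ x ∈ Vtx E, ∀ y ∈ Vtx E, x ≠ y → ¬ E x y → checkd E d x y < hatd E d x y

/-- The edge relation of the one-step extension `E ∪ {xy}`. -/
def extEdge (E : X → X → Prop) (x y : X) : X → X → Prop :=
  fun a b => E a b ∨ (a = x ∧ b = y) ∨ (a = y ∧ b = x)

/-- The weight function of the one-step extension `d ∪ {⟨xy, r⟩}`. -/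
noncomputable def extWt (d : X → X → ℝ) (x y : X) (r : ℝ) : X → X → ℝ :=
  fun a b => if (a = x ∧ b = y) ∨ (a = y ∧ b = x) then r else d a b

/-- The set `[V]² \ E` of unordered pairs of distinct vertices that are not edges. -/
def nonEdgePairs (E : X → X → Prop) : Set (Sym2 X) :=
  {e | ∃ a b : X, e = s(a, b) ∧ a ≠ b ∧ a ∈ Vtx E ∧ b ∈ Vtx E ∧ ¬ E a b}

/-- A set of (unordered) weighted pairs, presented as a relation `R`, is a full metric
on `V`: it is symmetric, its domain is exactly `[V]²`, it is single-valued, positive,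
and satisfies the triangle inequality. -/
def IsFullMetricRel (V : Set X) (R : X → X → ℝ → Prop) : Prop :=
  (∀ a b r, R a b r → R b a r) ∧
  (∀ a b r, R a b r → a ∈ V ∧ b ∈ V ∧ a ≠ b) ∧
  (∀ a b, a ∈ V → b ∈ V → a ≠ b → ∃ r, R a b r) ∧
  (∀ a b r s, R a b r → R a b s → r = s) ∧
  (∀ a b r, R a b r → 0 < r) ∧
  (∀ a b c r s t, R a b r → R b c s → R a c t → t ≤ r + s)

/-- A weight function `D` on `[V]²` is a full metric on `V`. -/
def IsFullMetricOn (V : Set X) (D : X → X → ℝ) : Prop :=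
  (∀ a b, a ∈ V → b ∈ V → a ≠ b → D a b = D b a) ∧
  (∀ a b, a ∈ V → b ∈ V → a ≠ b → 0 < D a b) ∧
  (∀ a b c, a ∈ V → b ∈ V → c ∈ V → a ≠ b → b ≠ c → a ≠ c → D a c ≤ D a b + D b c)

/-- Player I has a winning strategy in the metric-extending game `Game_d(lam, Fam)`:
there are functions `S1, S2` choosing, for each inning `β < lam` and each sequence of
previous answers of player II, a legal doubleton in `[V]²` and a set from `Fam`, such that
for every play of player II respecting the strategy, the resulting relation
`d ∪ {⟨x_α y_α, r_α⟩ : α < lam}` is a full metric on `V`. -/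
def WinningStratI (V : Set X) (E : X → X → Prop) (d : X → X → ℝ)
    (lam : Ordinal.{u}) (Fam : Set (Set ℝ)) : Prop :=
  ∃ (S1 : ∀ β : Ordinal.{u}, β < lam → (∀ α : Ordinal.{u}, α < β → ℝ) → X × X)
    (S2 : ∀ β : Ordinal.{u}, β < lam → (∀ α : Ordinal.{u}, α < β → ℝ) → Set ℝ),
    (∀ β hβ s, S2 β hβ s ∈ Fam) ∧
    (∀ β hβ s, (S1 β hβ s).1 ∈ V ∧ (S1 β hβ s).2 ∈ V ∧ (S1 β hβ s).1 ≠ (S1 β hβ s).2) ∧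
    (∀ s : ∀ α : Ordinal.{u}, α < lam → ℝ,
      (∀ α (hα : α < lam), s α hα ∈ S2 α hα (fun γ hγ => s γ (hγ.trans hα))) →
      IsFullMetricRel V (fun a b r =>
        (E a b ∧ r = d a b) ∨
        ∃ α, ∃ hα : α < lam,
          ((a = (S1 α hα (fun γ hγ => s γ (hγ.trans hα))).1 ∧
            b = (S1 α hα (fun γ hγ => s γ (hγ.trans hα))).2) ∨
           (a = (S1 α hα (fun γ hγ => s γ (hγ.trans hα))).2 ∧
            b = (S1 α hα (fun γ hγ => s γ (hγ.trans hα))).1)) ∧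
          r = s α hα))

/-- Player II has a winning strategy in the metric-extending game `Game_d(lam, Fam)`:
there is a function `T` assigning to each inning `β < lam` and each sequence of moves of
player I (of length `β + 1`) an answer in the set component of the last move, such that
for every legal play of player I, the resulting relation is not a full metric on `V`. -/
def WinningStratII (V : Set X) (E : X → X → Prop) (d : X → X → ℝ)
    (lam : Ordinal.{u}) (Fam : Set (Set ℝ)) : Prop :=
  ∃ T : ∀ β : Ordinal.{u}, β < lam → (∀ α : Ordinal.{u}, α ≤ β → (X × X) × Set ℝ) → ℝ,
    (∀ β hβ p, (p β le_rfl).2 ∈ Fam → T β hβ p ∈ (p β le_rfl).2) ∧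
    (∀ p : ∀ α : Ordinal.{u}, α < lam → (X × X) × Set ℝ,
      (∀ α hα, (p α hα).1.1 ∈ V ∧ (p α hα).1.2 ∈ V ∧ (p α hα).1.1 ≠ (p α hα).1.2 ∧
        (p α hα).2 ∈ Fam) →
      ¬ IsFullMetricRel V (fun a b r =>
        (E a b ∧ r = d a b) ∨
        ∃ α, ∃ hα : α < lam,
          ((a = (p α hα).1.1 ∧ b = (p α hα).1.2) ∨
           (a = (p α hα).1.2 ∧ b = (p α hα).1.1)) ∧
          r = T α hα (fun γ hγ => p γ (lt_of_le_of_lt hγ hα))))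

/-- The edge relation of the glued graph `E_d = E_p ∪ ⋃_{f ∈ F} E_f`. -/
def gluedEdge (Ep : X → X → Prop) (F : Set ((X → X → Prop) × (X → X → ℝ))) :
    X → X → Prop :=
  fun a b => Ep a b ∨ ∃ f ∈ F, f.1 a b

/-- `Λ(v; B) = inf {d̂(a,v) + d̂(v,b) - d̂(a,b) : a, b ∈ B}`. -/
noncomputable def Lam (E : X → X → Prop) (d : X → X → ℝ) (v : X) (B : Set X) : ℝ :=
  sInf {r | ∃ a ∈ B, ∃ b ∈ B, r = hatd E d a v + hatd E d v b - hatd E d a b}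

/-- The gluing setup: a graph pseudometric `p = (Ep, wp)` and a family `F` of graph
pseudometrics such that each member meets `V_p`, agrees with `p̂` on the intersection of
the vertex sets, and distinct members only meet inside `V_p`; `wd` is the glued weight
function `d = p ∪ ⋃ F` on `E_d = E_p ∪ ⋃_{f ∈ F} E_f`. -/
structure GluingSetup (Ep : X → X → Prop) (wp : X → X → ℝ)
    (F : Set ((X → X → Prop) × (X → X → ℝ))) (wd : X → X → ℝ) : Prop where
  hp : IsGraphPseudometric Ep wp
  hF : ∀ f ∈ F, IsGraphPseudometric f.1 f.2
  meet : ∀ f ∈ F, (Vtx f.1 ∩ Vtx Ep).Nonempty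
  agree : ∀ f ∈ F, ∀ x ∈ Vtx f.1 ∩ Vtx Ep, ∀ y ∈ Vtx f.1 ∩ Vtx Ep, x ≠ y →
    hatd f.1 f.2 x y = hatd Ep wp x y
  inter_sub : ∀ f ∈ F, ∀ g ∈ F, f ≠ g → Vtx f.1 ∩ Vtx g.1 ⊆ Vtx Ep
  wd_p : ∀ ⦃a b⦄, Ep a b → wd a b = wp a b
  wd_F : ∀ f ∈ F, ∀ ⦃a b⦄, f.1 a b → wd a b = f.2 a b

/-!
Cut a walk of the glued graph at its visits to `V_p`. Since distinct pieces meet only inside `V_p`,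
between two consecutive visits the walk stays in a single piece, either `p` itself or some `f`, so
its weight there is at least the distance in that piece, hence at least `p̂` of the two ends.
The triangle inequality for `p̂` then adds up these bounds.
-/

section WalkSums

variable {E : X → X → Prop} {d : X → X → ℝ} {x y z : X} {s t : ℝ}

lemma zero_mem_walkSums_self : (0 : ℝ) ∈ walkSums E d x x :=
  ⟨0, fun _ => x, rfl, rfl, by simp, by simp⟩

lemma add_mem_walkSums_of_adj (hxy : E x y) (ht : t ∈ walkSums E d y z) :
    d x y + t ∈ walkSums E d x z := by
  obtain ⟨n, c, rfl, rfl, hc, rfl⟩ := ht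
  refine ⟨n + 1, fun i => Nat.casesOn i x c, rfl, rfl, ?_, ?_⟩
  · rintro (_ | i) hi
    exacts [hxy, hc i (Nat.lt_of_succ_lt_succ hi)]
  · rw [Finset.sum_range_succ', add_comm]
    rfl

lemma add_mem_walkSums (hs : s ∈ walkSums E d x y) (ht : t ∈ walkSums E d y z) :
    s + t ∈ walkSums E d x z := by
  obtain ⟨n, c, rfl, rfl, hc, rfl⟩ := hs
  induction n generalizing c with
  | zero => simpa using ht
  | succ n ih =>
    rw [Finset.sum_range_succ', add_comm (Finset.sum _ _), add_assoc]
    exact add_mem_walkSums_of_adj (hc 0 n.succ_pos)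
      (ih (fun i => c (i + 1)) ht fun i hi => hc (i + 1) (Nat.succ_lt_succ hi))

lemma sum_Ico_mem_walkSums {c : ℕ → X} {m n : ℕ} (hmn : m ≤ n)
    (hc : ∀ i, m ≤ i → i < n → E (c i) (c (i + 1))) :
    ∑ i ∈ Finset.Ico m n, d (c i) (c (i + 1)) ∈ walkSums E d (c m) (c n) :=
  ⟨n - m, fun i => c (m + i), rfl, congrArg c (Nat.add_sub_of_le hmn),
    fun i hi => hc (m + i) (Nat.le_add_right m i) (Nat.add_lt_of_lt_sub' hi),
    Finset.sum_Ico_eq_sum_range _ m n⟩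

lemma mem_vtx_of_mem_walkSums (hE : ∀ ⦃a b⦄, E a b → E b a) (hxy : x ≠ y)
    (hs : s ∈ walkSums E d x y) :
    x ∈ Vtx E ∧ y ∈ Vtx E := by
  obtain ⟨_ | n, c, rfl, rfl, hc, -⟩ := hs
  · exact absurd rfl hxy
  · exact ⟨⟨_, hc 0 n.succ_pos⟩, ⟨_, hE (hc n n.lt_succ_self)⟩⟩

lemma Joined.walkSums_nonempty (h : Joined E x y) : (walkSums E d x y).Nonempty := by
  obtain ⟨n, c, h₀, hₙ, hc⟩ := h
  exact ⟨_, n, c, h₀, hₙ, hc, rfl⟩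

lemma nonneg_of_mem_walkSums (hd : ∀ ⦃a b⦄, E a b → 0 ≤ d a b) (hs : s ∈ walkSums E d x y) :
    0 ≤ s := by
  obtain ⟨n, c, -, -, hc, rfl⟩ := hs
  exact Finset.sum_nonneg fun i hi => hd (hc i (Finset.mem_range.1 hi))

lemma bddBelow_walkSums (hd : ∀ ⦃a b⦄, E a b → 0 ≤ d a b) : BddBelow (walkSums E d x y) :=
  ⟨0, fun _ => nonneg_of_mem_walkSums hd⟩

lemma hatd_le_of_mem_walkSums (hd : ∀ ⦃a b⦄, E a b → 0 ≤ d a b) (hs : s ∈ walkSums E d x y) :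
    hatd E d x y ≤ s :=
  csInf_le (bddBelow_walkSums hd) hs

open scoped Pointwise in
lemma hatd_triangle (hd : ∀ ⦃a b⦄, E a b → 0 ≤ d a b) (hxy : Joined E x y) (hyz : Joined E y z) :
    hatd E d x z ≤ hatd E d x y + hatd E d y z := by
  have hsub : walkSums E d x y + walkSums E d y z ⊆ walkSums E d x z :=
    Set.add_subset_iff.2 fun _ hs _ ht => add_mem_walkSums hs ht
  calc hatd E d x z
    _ ≤ sInf (walkSums E d x y + walkSums E d y z) :=
      csInf_le_csInf (bddBelow_walkSums hd)
        (hxy.walkSums_nonempty.add hyz.walkSums_nonempty) hsub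
    _ = hatd E d x y + hatd E d y z :=
      csInf_add hxy.walkSums_nonempty (bddBelow_walkSums hd)
        hyz.walkSums_nonempty (bddBelow_walkSums hd)

end WalkSums

section Excursions

lemma le_sum_range_of_le_sum_excursions {M : Type*} [AddCommMonoid M] [Preorder M]
    [IsOrderedAddMonoid M] {A : Set X} {ρ w : X → X → M} {c : ℕ → X} {n : ℕ}
    (hself : ∀ x ∈ A, ρ x x ≤ 0)
    (htriangle : ∀ x ∈ A, ∀ y ∈ A, ∀ z ∈ A, ρ x z ≤ ρ x y + ρ y z)
    (h₀ : c 0 ∈ A) (hₙ : c n ∈ A)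
    (hexc : ∀ i j, i < j → j ≤ n → c i ∈ A → c j ∈ A → (∀ k, i < k → k < j → c k ∉ A) →
      ρ (c i) (c j) ≤ ∑ k ∈ Finset.Ico i j, w (c k) (c (k + 1))) :
    ρ (c 0) (c n) ≤ ∑ k ∈ Finset.range n, w (c k) (c (k + 1)) := by
  induction n using Nat.strong_induction_on with
  | _ n ih =>
    obtain _ | n := n
    · simpa using hself (c 0) h₀
    obtain ⟨m, hm, hcm, hlast⟩ : ∃ m < n + 1, c m ∈ A ∧ ∀ k, m < k → k < n + 1 → c k ∉ A :=
      ⟨Nat.findGreatest (c · ∈ A) n, Nat.lt_succ_of_le (Nat.findGreatest_le n),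
        Nat.findGreatest_spec (P := (c · ∈ A)) n.zero_le h₀,
        fun k hk hkn => Nat.findGreatest_is_greatest hk (Nat.le_of_lt_succ hkn)⟩
    calc ρ (c 0) (c (n + 1))
      _ ≤ ρ (c 0) (c m) + ρ (c m) (c (n + 1)) := htriangle _ h₀ _ hcm _ hₙ
      _ ≤ ∑ k ∈ Finset.range m, w (c k) (c (k + 1)) +
          ∑ k ∈ Finset.Ico m (n + 1), w (c k) (c (k + 1)) :=
        add_le_add (ih m hm hcm fun i j hij hj => hexc i j hij (hj.trans hm.le))
          (hexc m (n + 1) hm le_rfl hcm hₙ hlast)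
      _ = ∑ k ∈ Finset.range (n + 1), w (c k) (c (k + 1)) :=
        Finset.sum_range_add_sum_Ico _ hm.le

lemma exists_forall_adj_of_interior_notMem {ι : Type*} {S : Set ι} {E : ι → X → X → Prop}
    {A : Set X} {c : ℕ → X} {m n : ℕ}
    (hswitch : ∀ i ∈ S, ∀ j ∈ S, ∀ x y z, E i x y → E j y z → y ∉ A → i = j)
    (hmn : m < n) (hc : ∀ k, m ≤ k → k < n → ∃ i ∈ S, E i (c k) (c (k + 1)))
    (hint : ∀ k, m < k → k < n → c k ∉ A) :
    ∃ i ∈ S, ∀ k, m ≤ k → k < n → E i (c k) (c (k + 1)) := by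
  obtain ⟨i, hi, hm⟩ := hc m le_rfl hmn
  refine ⟨i, hi, fun k hmk => ?_⟩
  induction k, hmk using Nat.le_induction with
  | base => exact fun _ => hm
  | succ k hmk ih =>
    intro hk
    obtain ⟨j, hj, hadj⟩ := hc (k + 1) (hmk.trans k.le_succ) hk
    obtain rfl : i = j := hswitch i hi j hj _ _ _ (ih (k.lt_succ_self.trans hk)) hadj
      (hint (k + 1) (Nat.lt_succ_of_le hmk) hk)
    exact hadj

end Excursions

section Gluing

variable {Ep : X → X → Prop} {wp wd : X → X → ℝ} {F : Set ((X → X → Prop) × (X → X → ℝ))}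

lemma GluingSetup.hatd_le_of_mem_piece_walkSums (hs : GluingSetup Ep wp F wd)
    {f : (X → X → Prop) × (X → X → ℝ)} (hf : f ∈ F) {x y : X} (hx : x ∈ Vtx Ep)
    (hy : y ∈ Vtx Ep) {s : ℝ} (hsum : s ∈ walkSums f.1 f.2 x y) : hatd Ep wp x y ≤ s := by
  have hpf := hs.hF f hf
  obtain rfl | hxy := eq_or_ne x y
  · exact (hatd_le_of_mem_walkSums hs.hp.nonneg zero_mem_walkSums_self).trans
      (nonneg_of_mem_walkSums hpf.nonneg hsum)
  · obtain ⟨hxf, hyf⟩ := mem_vtx_of_mem_walkSums hpf.symm hxy hsum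
    rw [← hs.agree f hf x ⟨hxf, hx⟩ y ⟨hyf, hy⟩ hxy]
    exact hatd_le_of_mem_walkSums hpf.nonneg hsum

lemma gluedEdge_iff_exists_mem_insert {a b : X} :
    gluedEdge Ep F a b ↔ ∃ f ∈ insert (Ep, wp) F, f.1 a b := by
  simp only [gluedEdge, Set.exists_mem_insert]

lemma eq_of_adj_of_notMem_vtx (hEp : ∀ ⦃a b⦄, Ep a b → Ep b a)
    (hF : ∀ f ∈ F, ∀ ⦃a b⦄, f.1 a b → f.1 b a)
    (hinter : ∀ f ∈ F, ∀ g ∈ F, f ≠ g → Vtx f.1 ∩ Vtx g.1 ⊆ Vtx Ep) :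
    ∀ f ∈ insert (Ep, wp) F, ∀ g ∈ insert (Ep, wp) F, ∀ x y z,
      f.1 x y → g.1 y z → y ∉ Vtx Ep → f = g := by
  rintro f (rfl | hf) g (rfl | hg) x y z hxy hyz hy
  · rfl
  · exact absurd ⟨x, hEp hxy⟩ hy
  · exact absurd ⟨z, hyz⟩ hy
  · by_contra hfg
    exact hy (hinter f hf g hg hfg ⟨⟨x, hF f hf hxy⟩, ⟨z, hyz⟩⟩)

theorem gluing_path_bound_general (hEp : ∀ ⦃a b⦄, Ep a b → Ep b a)
    (hwp : ∀ ⦃a b⦄, Ep a b → 0 ≤ wp a b) (hconn : ∀ x ∈ Vtx Ep, ∀ y ∈ Vtx Ep, Joined Ep x y)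
    (hF : ∀ f ∈ F, ∀ ⦃a b⦄, f.1 a b → f.1 b a)
    (hinter : ∀ f ∈ F, ∀ g ∈ F, f ≠ g → Vtx f.1 ∩ Vtx g.1 ⊆ Vtx Ep)
    (hle : ∀ f ∈ F, ∀ x ∈ Vtx Ep, ∀ y ∈ Vtx Ep, ∀ s ∈ walkSums f.1 f.2 x y, hatd Ep wp x y ≤ s)
    (hwd_p : ∀ ⦃a b⦄, Ep a b → wd a b = wp a b)
    (hwd_F : ∀ f ∈ F, ∀ ⦃a b⦄, f.1 a b → wd a b = f.2 a b)
    {n : ℕ} {c : ℕ → X} (h₀ : c 0 ∈ Vtx Ep) (hₙ : c n ∈ Vtx Ep)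
    (hedge : ∀ i, i < n → gluedEdge Ep F (c i) (c (i + 1))) :
    hatd Ep wp (c 0) (c n) ≤ ∑ i ∈ Finset.range n, wd (c i) (c (i + 1)) := by
  have hwd : ∀ f ∈ insert (Ep, wp) F, ∀ ⦃a b⦄, f.1 a b → wd a b = f.2 a b :=
    Set.forall_mem_insert.2 ⟨hwd_p, hwd_F⟩
  have hpiece : ∀ f ∈ insert (Ep, wp) F, ∀ x ∈ Vtx Ep, ∀ y ∈ Vtx Ep,
      ∀ s ∈ walkSums f.1 f.2 x y, hatd Ep wp x y ≤ s :=
    Set.forall_mem_insert.2 ⟨fun _ _ _ _ _ => hatd_le_of_mem_walkSums hwp, hle⟩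
  refine le_sum_range_of_le_sum_excursions
    (fun x _ => hatd_le_of_mem_walkSums hwp zero_mem_walkSums_self)
    (fun x hx y hy z hz => hatd_triangle hwp (hconn x hx y hy) (hconn y hy z hz)) h₀ hₙ ?_
  intro i j hij hj hci hcj hint
  obtain ⟨f, hf, hfadj⟩ := exists_forall_adj_of_interior_notMem
    (eq_of_adj_of_notMem_vtx hEp hF hinter) hij
    (fun k _ hk => gluedEdge_iff_exists_mem_insert.1 (hedge k (hk.trans_le hj))) hint
  calc hatd Ep wp (c i) (c j)
    _ ≤ ∑ k ∈ Finset.Ico i j, f.2 (c k) (c (k + 1)) :=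
      hpiece f hf _ hci _ hcj _ (sum_Ico_mem_walkSums hij.le hfadj)
    _ = ∑ k ∈ Finset.Ico i j, wd (c k) (c (k + 1)) :=
      Finset.sum_congr rfl fun k hk =>
        (hwd f hf (hfadj k (Finset.mem_Ico.1 hk).1 (Finset.mem_Ico.1 hk).2)).symm

end Gluing

/-- In the gluing setup, for every `n` and vertices
`x₀, …, xₙ ∈ V_d` with `x₀, xₙ ∈ V_p` and `x_{i-1}x_i ∈ E_d`, we have
`p̂(x₀, xₙ) ≤ Σ_{i=1}^n d(x_{i-1}x_i)`. -/
theorem gluing_path_bound (Ep : X → X → Prop) (wp : X → X → ℝ)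
    (F : Set ((X → X → Prop) × (X → X → ℝ))) (wd : X → X → ℝ)
    (hs : GluingSetup Ep wp F wd) (n : ℕ) (c : ℕ → X)
    (h₀ : c 0 ∈ Vtx Ep) (hₙ : c n ∈ Vtx Ep)
    (hedge : ∀ i, i < n → gluedEdge Ep F (c i) (c (i + 1))) :
    hatd Ep wp (c 0) (c n) ≤ ∑ i ∈ Finset.range n, wd (c i) (c (i + 1)) :=
  gluing_path_bound_general hs.hp.symm hs.hp.nonneg hs.hp.connected
    (fun f hf => (hs.hF f hf).symm) hs.inter_sub
    (fun _ hf _ hx _ hy _ => hs.hatd_le_of_mem_piece_walkSums hf hx hy)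
    hs.wd_p hs.wd_F h₀ hₙ hedge

end GraphMetricPaper
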